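/- Let (Ω, μ) be a probability space, n > 0 a blocklength, θ > 0 a delay-QoS exponent, ϑ > 0 an error-rate-QoS exponent, and R : Ω → ℝ a nonnegative measurable coding-rate function. Then the ε-effective capacity satisfies the two-sided bound 0 ≤ EC(θ,ϑ) ≤ ϑ/θ, where EC(θ,ϑ) = −(1/(nθ)) log ∫_Ω ( e^{−nϑ} + (1 − e^{−nϑ}) e^{−nθR(ω)} ) dμ(ω). In particular, with nonzero decoding error probability the effective service rate is capped by the ratio of the reliability exponent to the delay exponent. -/

import Mathlib

open MeasureTheory

/-- Two-sided bound on the ε-effective capacity (Definition 3):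
`0 ≤ EC(θ,ϑ) ≤ ϑ/θ`, where
`EC(θ,ϑ) = −(1/(nθ)) log ∫ (e^{−nϑ} + (1 − e^{−nϑ}) e^{−nθR(ω)}) dμ`. -/
theorem eps_effective_capacity_bounds
    {Ω : Type*} [MeasurableSpace Ω] (μ : Measure Ω) [IsProbabilityMeasure μ]
    (n θ ϑ : ℝ) (hn : 0 < n) (hθ : 0 < θ) (hϑ : 0 < ϑ)
    (R : Ω → ℝ) (hRmeas : Measurable R) (hRnonneg : ∀ ω, 0 ≤ R ω) :
    0 ≤ -(1 / (n * θ)) *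
        Real.log (∫ ω, (Real.exp (-(n * ϑ)) +
          (1 - Real.exp (-(n * ϑ))) * Real.exp (-(n * θ * R ω))) ∂μ) ∧
    -(1 / (n * θ)) *
        Real.log (∫ ω, (Real.exp (-(n * ϑ)) +
          (1 - Real.exp (-(n * ϑ))) * Real.exp (-(n * θ * R ω))) ∂μ)
      ≤ ϑ / θ := by
  have he1 : Real.exp (-(n * ϑ)) ≤ 1 := Real.exp_le_one_iff.2 (by
    have := mul_pos hn hϑ
    linarith)
  have hx : ∀ ω, Real.exp (-(n * θ * R ω)) ≤ 1 := fun ω => Real.exp_le_one_iff.2 (by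
    have := mul_nonneg (mul_pos hn hθ).le (hRnonneg ω)
    linarith)
  have hlo : ∀ ω, Real.exp (-(n * ϑ)) ≤ Real.exp (-(n * ϑ)) +
      (1 - Real.exp (-(n * ϑ))) * Real.exp (-(n * θ * R ω)) := fun ω => by
    have := mul_nonneg (sub_nonneg.2 he1) (Real.exp_pos (-(n * θ * R ω))).le
    linarith
  have hhi : ∀ ω, Real.exp (-(n * ϑ)) +
      (1 - Real.exp (-(n * ϑ))) * Real.exp (-(n * θ * R ω)) ≤ 1 := fun ω => by
    have := mul_le_mul_of_nonneg_left (hx ω) (sub_nonneg.2 he1)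
    linarith
  have hint : Integrable (fun ω => Real.exp (-(n * ϑ)) +
      (1 - Real.exp (-(n * ϑ))) * Real.exp (-(n * θ * R ω))) μ := by
    refine Integrable.of_bound (C := 1) (Measurable.aestronglyMeasurable (by fun_prop))
      (Filter.Eventually.of_forall fun ω => ?_)
    rw [Real.norm_eq_abs, abs_of_nonneg ((Real.exp_pos _).le.trans (hlo ω))]
    exact hhi ω
  have h1 := integral_mono (integrable_const _) hint hlo
  have h2 := integral_mono hint (integrable_const _) hhi
  simp only [integral_const, probReal_univ, one_smul] at h1 h2
  set I := ∫ ω, (Real.exp (-(n * ϑ)) +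
      (1 - Real.exp (-(n * ϑ))) * Real.exp (-(n * θ * R ω))) ∂μ with hI
  have hIpos : 0 < I := (Real.exp_pos _).trans_le h1
  have l1 : -(n * ϑ) ≤ Real.log I := (Real.le_log_iff_exp_le hIpos).2 h1
  have l2 : Real.log I ≤ 0 := Real.log_nonpos hIpos.le h2
  have hnt := mul_pos hn hθ
  have hc : 0 < 1 / (n * θ) := by positivity
  constructor
  · nlinarith
  · have h3 := mul_le_mul_of_nonneg_left l1 hc.le
    have h4 : ϑ / θ = 1 / (n * θ) * (n * ϑ) := by field_simp
    rw [h4]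
    linarith
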